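/- arXiv:2006.00240 — 2 statements merged into one kernel-verified Lean document; each statement's English description precedes it below -/
import Mathlib

section
/- Let n ≥ 1, β > n, and let φ be a doubling Young function satisfying C_β := sup_{t>0} (t^β/φ(t)) ∫_0^t φ(s) s^{-β-1} ds < ∞. Suppose a domain Ω ⊂ ℝⁿ satisfies: there exists C > 0 such that for every u ∈ Ẇ^{β,φ}(Ω) there is ũ with ũ = u almost everywhere and |ũ(x) − ũ(y)| ≤ C φ⁻¹(|x−y|^{β−n}) ‖u‖_{Ẇ^{β,φ}(Ω)} for all x, y ∈ Ω. Then Ω is Ahlfors n-regular. -/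
/-!
The imbedding is tested on cones. Fix `x ∈ Ω` and `r > 0`, and let `u` be the cone
`max(0, 1 - |z - x|/r)`, which is `1/r`-Lipschitz with values in `[0, 1]` and vanishes off
`B(x, r)`. Pairs of points off `B(x, r)` do not contribute to the double integral defining the
seminorm, so at level `λ` it is at most
`2 |B(x, r) ∩ Ω| ∫ φ(min(1, |h|/r) / λ) |h|^{-n-β} dh`. In polar coordinates the part `|h| ≤ r` is
controlled by `C_β` after rescaling and the part `|h| > r` is explicit, so the double integral is
at most `A φ(1/λ) r^{-β} |B(x, r) ∩ Ω|` for a constant `A`. Choosing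
`φ(1/λ) = r^β / (A |B(x, r) ∩ Ω|)` therefore gives `‖u‖ ≤ λ`.

The representative provided by the imbedding is continuous, hence equal to `u` on the open set
`Ω`. If `y ∈ Ω` has `|x - y| = r`, then `u(x) - u(y) = 1`, so the imbedding yields
`1/λ ≤ C φ⁻¹(r^{β-n})`. Applying `φ` and the doubling condition, `r^β / (A |B(x, r) ∩ Ω|)` is at
most a constant times `r^{β-n}`, which is the volume bound. For a radius `r < 2 diam Ω` such a `y`
exists at distance `r/4`, because `Ω` is connected and is not contained in the closed ball of
radius `r/4` about `x`.
-/

open MeasureTheory Metric Set Filter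
open scoped ENNReal NNReal Topology Classical

noncomputable section

/-- `φ` is a Young function: convex, continuous on `[0,∞)`, `φ(0)=0`, `φ(t)>0` for `t>0`. -/
def IsYoung (φ : ℝ → ℝ) : Prop :=
  ContinuousOn φ (Set.Ici 0) ∧ ConvexOn ℝ (Set.Ici 0) φ ∧ φ 0 = 0 ∧ ∀ t > 0, 0 < φ t

/-- `φ` is doubling with constant `K > 1`: `φ(2t) ≤ K φ(t)` for all `t > 0`. -/
def IsDoubling (φ : ℝ → ℝ) (K : ℝ) : Prop :=
  1 < K ∧ ∀ t > 0, φ (2 * t) ≤ K * φ t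

/-- The (generalized) inverse of a Young function. -/
def yInv (φ : ℝ → ℝ) (y : ℝ) : ℝ :=
  sInf {t : ℝ | 0 ≤ t ∧ y ≤ φ t}

/-- `sup_{t>0} (t^β/φ(t)) ∫_0^t φ(s) s^{-β-1} ds ≤ M`. -/
def CbetaLE (β : ℝ) (φ : ℝ → ℝ) (M : ℝ) : Prop :=
  ∀ t > 0,
    ENNReal.ofReal (t ^ β / φ t) *
        (∫⁻ s in Set.Ioc (0 : ℝ) t, ENNReal.ofReal (φ s / s ^ (β + 1))) ≤
      ENNReal.ofReal M

/-- The condition `C_β := sup_{t>0} (t^β/φ(t)) ∫_0^t φ(s) s^{-β-1} ds < ∞`. -/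
def CbetaFinite (β : ℝ) (φ : ℝ → ℝ) : Prop :=
  ∃ M : ℝ, CbetaLE β φ M

/-- The double integral `∫_Ω ∫_Ω φ(|u(x)-u(y)|/λ) |x-y|^{-n-β} dx dy`. -/
def fracIntegral (n : ℕ) (β : ℝ) (φ : ℝ → ℝ) (Ω : Set (EuclideanSpace ℝ (Fin n)))
    (u : EuclideanSpace ℝ (Fin n) → ℝ) (lam : ℝ) : ℝ≥0∞ :=
  ∫⁻ x in Ω, ∫⁻ y in Ω,
    ENNReal.ofReal (φ (|u x - u y| / lam) / dist x y ^ ((n : ℝ) + β))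

/-- The fractional Orlicz–Sobolev (Luxemburg-type) seminorm `‖u‖_{Ẇ^{β,φ}(Ω)}`,
valued in `[0,∞]` (it is `∞` iff no admissible `λ` exists). -/
def fracNorm (n : ℕ) (β : ℝ) (φ : ℝ → ℝ) (Ω : Set (EuclideanSpace ℝ (Fin n)))
    (u : EuclideanSpace ℝ (Fin n) → ℝ) : ℝ≥0∞ :=
  sInf {lam : ℝ≥0∞ | 0 < lam ∧ lam ≠ ∞ ∧ fracIntegral n β φ Ω u lam.toReal ≤ 1}

/-- `u ∈ Ẇ^{β,φ}(Ω)` : locally integrable on `Ω` with finite seminorm. -/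
def MemW (n : ℕ) (β : ℝ) (φ : ℝ → ℝ) (Ω : Set (EuclideanSpace ℝ (Fin n)))
    (u : EuclideanSpace ℝ (Fin n) → ℝ) : Prop :=
  LocallyIntegrableOn u Ω ∧ fracNorm n β φ Ω u ≠ ∞

/-- The Orlicz (Luxemburg) norm `‖u‖_{L^ψ(Ω)}`, valued in `[0,∞]`. -/
def luxNorm (n : ℕ) (ψ : ℝ → ℝ) (Ω : Set (EuclideanSpace ℝ (Fin n)))
    (u : EuclideanSpace ℝ (Fin n) → ℝ) : ℝ≥0∞ :=
  sInf {lam : ℝ≥0∞ | 0 < lam ∧ lam ≠ ∞ ∧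
    (∫⁻ x in Ω, ENNReal.ofReal (ψ (|u x| / lam.toReal))) ≤ 1}

/-- `Ω` is Ahlfors `n`-regular: `|B(x,r) ∩ Ω| ≥ θ rⁿ` for all `x ∈ Ω`, `0 < r < 2 diam Ω`. -/
def AhlforsRegular (n : ℕ) (Ω : Set (EuclideanSpace ℝ (Fin n))) : Prop :=
  ∃ θ > (0 : ℝ), ∀ x ∈ Ω, ∀ r : ℝ, 0 < r → ENNReal.ofReal r < 2 * EMetric.diam Ω →
    ENNReal.ofReal (θ * r ^ n) ≤ volume (Metric.ball x r ∩ Ω)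

/-- `Ω` is a `Ẇ^{β,φ}`-extension domain: there are `C > 0` and a linear operator `E`
from `Ẇ^{β,φ}(Ω)` to `Ẇ^{β,φ}(ℝⁿ)` with `Eu = u` a.e. on `Ω` and
`‖Eu‖_{Ẇ^{β,φ}(ℝⁿ)} ≤ C ‖u‖_{Ẇ^{β,φ}(Ω)}`. -/
def IsExtensionDomain (n : ℕ) (β : ℝ) (φ : ℝ → ℝ)
    (Ω : Set (EuclideanSpace ℝ (Fin n))) : Prop :=
  ∃ C > (0 : ℝ), ∃ E : (EuclideanSpace ℝ (Fin n) → ℝ) → (EuclideanSpace ℝ (Fin n) → ℝ),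
    (∀ u v, MemW n β φ Ω u → MemW n β φ Ω v → E (u + v) = E u + E v) ∧
    (∀ (c : ℝ) (u), MemW n β φ Ω u → E (c • u) = c • E u) ∧
    (∀ u, MemW n β φ Ω u →
      MemW n β φ Set.univ (E u) ∧
      (∀ᵐ x ∂(volume.restrict Ω), E u x = u x) ∧
      fracNorm n β φ Set.univ (E u) ≤ ENNReal.ofReal C * fracNorm n β φ Ω u)

end

section YoungFunctions

variable {φ : ℝ → ℝ} {y t : ℝ}

lemma IsYoung.strictMonoOn (hφ : IsYoung φ) : StrictMonoOn φ (Ici 0) := by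
  obtain ⟨-, hconv, hzero, hpos⟩ := hφ
  intro a ha b hb hab
  rcases eq_or_lt_of_le (mem_Ici.1 ha) with rfl | ha_pos
  · rw [hzero]
    exact hpos b hab
  · exact hconv.strictMonoOn self_mem_Ici ha_pos (by rw [hzero]; exact hpos a ha_pos)
      ⟨ha, self_mem_Ici⟩ ⟨hb, hab.le⟩ hab

lemma IsYoung.monotoneOn (hφ : IsYoung φ) : MonotoneOn φ (Ici 0) :=
  hφ.strictMonoOn.monotoneOn

lemma IsYoung.tendsto_atTop (hφ : IsYoung φ) : Tendsto φ atTop atTop := by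
  have hlin : Tendsto (fun t : ℝ => φ 1 * t) atTop atTop :=
    tendsto_id.const_mul_atTop (hφ.2.2.2 1 one_pos)
  refine tendsto_atTop_mono' _ ?_ hlin
  filter_upwards [eventually_ge_atTop 1] with t ht
  have ht_pos : 0 < t := one_pos.trans_le ht
  have hsecant := hφ.2.1.secant_mono self_mem_Ici (mem_Ici.2 zero_le_one) (mem_Ici.2 ht_pos.le)
    one_ne_zero ht_pos.ne' ht
  rwa [hφ.2.2.1, sub_zero, sub_zero, sub_zero, sub_zero, div_one, le_div_iff₀ ht_pos] at hsecant

lemma IsYoung.surjOn (hφ : IsYoung φ) : SurjOn φ (Ici 0) (Ici 0) := by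
  simpa only [SurjOn, hφ.2.2.1] using intermediate_value_Ici hφ.1 hφ.tendsto_atTop

lemma yInv_nonneg (φ : ℝ → ℝ) (y : ℝ) : 0 ≤ yInv φ y :=
  Real.sInf_nonneg fun _ ht => ht.1

lemma yInv_le (ht : 0 ≤ t) (hy : y ≤ φ t) : yInv φ y ≤ t :=
  csInf_le ⟨0, fun _ hs => hs.1⟩ ⟨ht, hy⟩

lemma IsYoung.yInv_apply (hφ : IsYoung φ) (ht : 0 ≤ t) : yInv φ (φ t) = t :=
  IsLeast.csInf_eq ⟨⟨ht, le_rfl⟩, fun _ hs => (hφ.strictMonoOn.le_iff_le ht hs.1).1 hs.2⟩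

lemma IsYoung.apply_yInv (hφ : IsYoung φ) (hy : 0 ≤ y) : φ (yInv φ y) = y := by
  obtain ⟨t, ht, rfl⟩ := hφ.surjOn hy
  rw [hφ.yInv_apply ht]

lemma IsYoung.yInv_pos (hφ : IsYoung φ) (hy : 0 < y) : 0 < yInv φ y := by
  refine (yInv_nonneg φ y).lt_of_ne fun h => hy.ne ?_
  rw [← hφ.apply_yInv hy.le, ← h, hφ.2.2.1]

lemma IsYoung.tendsto_yInv_zero (hφ : IsYoung φ) : Tendsto (yInv φ) (𝓝 0) (𝓝 0) := by
  refine tendsto_order.2 ⟨fun a ha => .of_forall fun y => ha.trans_le (yInv_nonneg φ y), ?_⟩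
  intro ε hε
  filter_upwards [Iio_mem_nhds (hφ.2.2.2 (ε / 2) (half_pos hε))] with y hy
  exact (yInv_le (half_pos hε).le (le_of_lt hy)).trans_lt (half_lt_self hε)

lemma IsDoubling.pow_mul_le {K : ℝ} (hK : IsDoubling φ K) (k : ℕ) (ht : 0 < t) :
    φ (2 ^ k * t) ≤ K ^ k * φ t := by
  have hK_pos : 0 < K := one_pos.trans hK.1
  induction k with
  | zero => simp
  | succ k ih =>
    calc φ (2 ^ (k + 1) * t) = φ (2 * (2 ^ k * t)) := by ring_nf
      _ ≤ K * φ (2 ^ k * t) := hK.2 _ (by positivity)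
      _ ≤ K * (K ^ k * φ t) := by gcongr
      _ = K ^ (k + 1) * φ t := by ring

lemma IsDoubling.exists_map_mul_le {K : ℝ} (hK : IsDoubling φ K) (hmono : MonotoneOn φ (Ici 0))
    {C : ℝ} (hC : 0 ≤ C) : ∃ D > 0, ∀ t > 0, φ (C * t) ≤ D * φ t := by
  obtain ⟨k, hk⟩ := pow_unbounded_of_one_lt C one_lt_two
  refine ⟨K ^ k, pow_pos (one_pos.trans hK.1) k, fun t ht => ?_⟩
  calc φ (C * t) ≤ φ (2 ^ k * t) :=
        hmono (mem_Ici.2 (by positivity)) (mem_Ici.2 (by positivity)) (by gcongr)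
    _ ≤ K ^ k * φ t := hK.pow_mul_le k ht

end YoungFunctions

section LebesgueIntegrals

lemma lintegral_fun_norm_addHaar {E : Type*} [NormedAddCommGroup E] [NormedSpace ℝ E]
    [Nontrivial E] [FiniteDimensional ℝ E] [MeasurableSpace E] [BorelSpace E]
    (μ : Measure E) [μ.IsAddHaarMeasure] {f : ℝ → ℝ≥0∞} (hf : Measurable f) :
    ∫⁻ x, f ‖x‖ ∂μ = μ.toSphere univ *
      ∫⁻ t in Ioi (0 : ℝ), ENNReal.ofReal (t ^ (Module.finrank ℝ E - 1)) * f t :=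
  calc ∫⁻ x, f ‖x‖ ∂μ
      = ∫⁻ x : ({0}ᶜ : Set E), f ‖x.1‖ ∂(μ.comap (↑)) := by
        rw [lintegral_subtype_comap (measurableSet_singleton _).compl (fun x : E => f ‖x‖),
          restrict_compl_singleton]
    _ = ∫⁻ p, f p.2 ∂μ.toSphere.prod (.volumeIoiPow (Module.finrank ℝ E - 1)) := by
        simpa only [homeomorphUnitSphereProd_apply_snd_coe] using
          μ.measurePreserving_homeomorphUnitSphereProd.lintegral_comp
            (f := fun p => f p.2) (by fun_prop)
    _ = μ.toSphere univ * ∫⁻ t : Ioi (0 : ℝ), f t ∂.volumeIoiPow (Module.finrank ℝ E - 1) := by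
        rw [lintegral_prod _ (by fun_prop)]
        simp only [lintegral_const, mul_comm]
    _ = _ := by
        rw [Measure.volumeIoiPow,
          lintegral_withDensity_eq_lintegral_mul _ (by fun_prop) (by fun_prop)]
        congr 1
        exact lintegral_subtype_comap measurableSet_Ioi
          fun t : ℝ => ENNReal.ofReal (t ^ (Module.finrank ℝ E - 1)) * f t

lemma setLIntegral_Ioc_comp_mul_left {a : ℝ} (ha : 0 < a) (b c : ℝ) (f : ℝ → ℝ≥0∞) :
    ∫⁻ t in Ioc b c, f (a * t) = ENNReal.ofReal a⁻¹ * ∫⁻ s in Ioc (a * b) (a * c), f s := by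
  have hsubst := lintegral_image_eq_lintegral_abs_deriv_mul (f := fun t => a * t)
    (f' := fun _ => a) measurableSet_Ioc
    (fun t _ => by simpa using ((hasDerivAt_id t).const_mul a).hasDerivWithinAt)
    (mul_right_injective₀ ha.ne').injOn f (s := Ioc b c)
  rw [image_mul_left_Ioc ha, abs_of_pos ha, lintegral_const_mul' _ _ ENNReal.ofReal_ne_top]
    at hsubst
  rw [hsubst, ← mul_assoc, ← ENNReal.ofReal_mul (by positivity), inv_mul_cancel₀ ha.ne',
    ENNReal.ofReal_one, one_mul]

lemma setLIntegral_Ioi_rpow_of_lt {a r : ℝ} (ha : a < -1) (hr : 0 < r) :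
    ∫⁻ t in Ioi r, ENNReal.ofReal (t ^ a) = ENNReal.ofReal (-r ^ (a + 1) / (a + 1)) := by
  rw [← integral_Ioi_rpow_of_lt ha hr,
    ofReal_integral_eq_lintegral_ofReal (integrableOn_Ioi_rpow_of_lt ha hr)]
  filter_upwards [ae_restrict_mem measurableSet_Ioi] with t ht
  exact Real.rpow_nonneg (hr.trans ht).le a

lemma lintegral_lintegral_le_of_le_comp_sub {G : Type*} [AddGroup G] [MeasurableSpace G]
    [MeasurableAdd₂ G] [MeasurableNeg G] {μ : Measure G} [SFinite μ] [μ.IsAddLeftInvariant]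
    [μ.IsNegInvariant] {f : G → G → ℝ≥0∞} {k : G → ℝ≥0∞} (hk : Measurable k)
    (hk_neg : ∀ h, k (-h) = k h) {s Ω : Set G} (hs : MeasurableSet s)
    (hfk : ∀ z w, f z w ≤ k (z - w)) (hf_zero : ∀ z ∉ s, ∀ w ∉ s, f z w = 0) :
    ∫⁻ z in Ω, ∫⁻ w in Ω, f z w ∂μ ∂μ ≤ 2 * (μ (s ∩ Ω) * ∫⁻ h, k h ∂μ) := by
  let χ : G → ℝ≥0∞ := s.indicator 1
  have hχ : Measurable χ := measurable_one.indicator hs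
  have hf_le : ∀ z w, f z w ≤ χ z * k (z - w) + χ w * k (z - w) := by
    intro z w
    by_cases hz : z ∈ s
    · exact (hfk z w).trans (le_add_right (by simp [χ, hz]))
    by_cases hw : w ∈ s
    · exact (hfk z w).trans (le_add_left (by simp [χ, hw]))
    · simp [hf_zero z hz w hw]
  have hleft : ∫⁻ z in Ω, ∫⁻ w in Ω, χ z * k (z - w) ∂μ ∂μ ≤ μ (s ∩ Ω) * ∫⁻ h, k h ∂μ :=
    calc ∫⁻ z in Ω, ∫⁻ w in Ω, χ z * k (z - w) ∂μ ∂μ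
        ≤ ∫⁻ z in Ω, χ z * ∫⁻ h, k h ∂μ ∂μ := by
          refine lintegral_mono fun z => ?_
          rw [lintegral_const_mul _ (by fun_prop), ← lintegral_sub_left_eq_self k z]
          exact mul_le_mul_right (setLIntegral_le_lintegral _ _) _
      _ = μ (s ∩ Ω) * ∫⁻ h, k h ∂μ := by
          rw [lintegral_mul_const _ hχ, lintegral_indicator_one hs, Measure.restrict_apply hs]
  have hright : ∫⁻ z in Ω, ∫⁻ w in Ω, χ w * k (z - w) ∂μ ∂μ ≤ μ (s ∩ Ω) * ∫⁻ h, k h ∂μ := by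
    have hk_symm : ∀ z w, k (z - w) = k (w - z) := fun z w => by rw [← neg_sub, hk_neg]
    rw [lintegral_lintegral_swap (by fun_prop)]
    simpa only [hk_symm] using hleft
  calc ∫⁻ z in Ω, ∫⁻ w in Ω, f z w ∂μ ∂μ
      ≤ ∫⁻ z in Ω, ∫⁻ w in Ω, (χ z * k (z - w) + χ w * k (z - w)) ∂μ ∂μ := by
        gcongr with z w
        exact hf_le z w
    _ = (∫⁻ z in Ω, ∫⁻ w in Ω, χ z * k (z - w) ∂μ ∂μ) +
          ∫⁻ z in Ω, ∫⁻ w in Ω, χ w * k (z - w) ∂μ ∂μ := by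
        rw [← lintegral_add_left (by fun_prop)]
        refine lintegral_congr fun z => ?_
        rw [lintegral_add_left (by fun_prop)]
    _ ≤ 2 * (μ (s ∩ Ω) * ∫⁻ h, k h ∂μ) := by
        rw [two_mul]
        exact add_le_add hleft hright

end LebesgueIntegrals

section ConeMajorant

/-- The kernel `φ(min(1, |t|/r) / λ) / |t|^γ`. With `t = |z - w|` and `γ = n + β` it dominates the
integrand of the seminorm, at level `λ`, of a `1/r`-Lipschitz function with oscillation at most `1`.
The argument is `|t|` rather than `t` so that the kernel is measurable on all of `ℝ`. -/
noncomputable def coneMajorant (φ : ℝ → ℝ) (γ r lam t : ℝ) : ℝ≥0∞ :=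
  ENNReal.ofReal (φ (min 1 (|t| / r) / lam) / |t| ^ γ)

variable {φ : ℝ → ℝ} {β γ r lam t : ℝ}

lemma measurable_coneMajorant (hφ : ContinuousOn φ (Ici 0)) (γ : ℝ) (hr : 0 ≤ r)
    (hlam : 0 ≤ lam) : Measurable (coneMajorant φ γ r lam) := by
  have hcont : Continuous fun t : ℝ => φ (min 1 (|t| / r) / lam) :=
    hφ.comp_continuous (by fun_prop) fun t => mem_Ici.2 (by positivity)
  exact (hcont.measurable.div (by fun_prop)).ennreal_ofReal

lemma coneMajorant_of_le (hr : 0 < r) (ht : 0 < t) (htr : t ≤ r) :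
    coneMajorant φ γ r lam t = ENNReal.ofReal (φ (t / r / lam) / t ^ γ) := by
  rw [coneMajorant, abs_of_pos ht, min_eq_right ((div_le_one hr).2 htr)]

lemma coneMajorant_of_ge (hr : 0 < r) (hrt : r ≤ t) :
    coneMajorant φ γ r lam t = ENNReal.ofReal (φ lam⁻¹ / t ^ γ) := by
  rw [coneMajorant, abs_of_pos (hr.trans_le hrt), min_eq_left ((one_le_div hr).2 hrt), one_div]

lemma ofReal_pow_mul_coneMajorant (k : ℕ) (ht : 0 < t) :
    ENNReal.ofReal (t ^ k) * coneMajorant φ (k + γ) r lam t = coneMajorant φ γ r lam t := by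
  rw [coneMajorant, coneMajorant, abs_of_pos ht, ← ENNReal.ofReal_mul (by positivity),
    Real.rpow_add ht, Real.rpow_natCast, ← mul_div_assoc, mul_div_mul_left _ _ (by positivity)]

/-- The substitution `s = t / (r λ)` turns the integral into the one defining `C_β`. -/
lemma setLIntegral_Ioc_coneMajorant_le {M : ℝ} (hM : CbetaLE β φ M) (hr : 0 < r) (hlam : 0 < lam)
    (hφ_pos : 0 < φ lam⁻¹) :
    ∫⁻ t in Ioc 0 r, coneMajorant φ (β + 1) r lam t ≤
      ENNReal.ofReal M * ENNReal.ofReal (φ lam⁻¹ / r ^ β) := by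
  set a := (r * lam)⁻¹ with ha_def
  have ha : 0 < a := by positivity
  have har : a * r = lam⁻¹ := by rw [ha_def]; field_simp
  let g : ℝ → ℝ≥0∞ := fun s => ENNReal.ofReal (φ s / s ^ (β + 1))
  calc ∫⁻ t in Ioc 0 r, coneMajorant φ (β + 1) r lam t
      = ∫⁻ t in Ioc 0 r, ENNReal.ofReal (a ^ (β + 1)) * g (a * t) := by
        refine setLIntegral_congr_fun measurableSet_Ioc fun t ⟨ht, htr⟩ => ?_
        rw [coneMajorant_of_le hr ht htr, ← ENNReal.ofReal_mul (by positivity),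
          Real.mul_rpow ha.le ht.le, ← mul_div_assoc, mul_div_mul_left _ _ (by positivity),
          div_div, div_eq_inv_mul t]
    _ = ENNReal.ofReal (a ^ β) * ∫⁻ s in Ioc 0 lam⁻¹, g s := by
        rw [lintegral_const_mul' _ _ ENNReal.ofReal_ne_top, setLIntegral_Ioc_comp_mul_left ha,
          mul_zero, har, ← mul_assoc, ← ENNReal.ofReal_mul (by positivity),
          Real.rpow_add_one ha.ne', mul_inv_cancel_right₀ ha.ne']
    _ = ENNReal.ofReal (φ lam⁻¹ / r ^ β) *
          (ENNReal.ofReal (lam⁻¹ ^ β / φ lam⁻¹) * ∫⁻ s in Ioc 0 lam⁻¹, g s) := by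
        rw [← mul_assoc, ← ENNReal.ofReal_mul (by positivity), ← har, Real.mul_rpow ha.le hr.le,
          har]
        congr 2
        rw [div_mul_div_comm, mul_comm (φ lam⁻¹), mul_assoc,
          mul_div_cancel_right₀ _ (by positivity)]
    _ ≤ ENNReal.ofReal (φ lam⁻¹ / r ^ β) * ENNReal.ofReal M := by
        gcongr
        exact hM lam⁻¹ (inv_pos.2 hlam)
    _ = _ := mul_comm _ _

lemma setLIntegral_Ioi_coneMajorant (hβ : 0 < β) (hr : 0 < r) (hφ_nonneg : 0 ≤ φ lam⁻¹) :
    ∫⁻ t in Ioi r, coneMajorant φ (β + 1) r lam t =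
      ENNReal.ofReal β⁻¹ * ENNReal.ofReal (φ lam⁻¹ / r ^ β) :=
  calc ∫⁻ t in Ioi r, coneMajorant φ (β + 1) r lam t
      = ∫⁻ t in Ioi r, ENNReal.ofReal (φ lam⁻¹) * ENNReal.ofReal (t ^ (-(β + 1))) := by
        refine setLIntegral_congr_fun measurableSet_Ioi fun t ht => ?_
        rw [coneMajorant_of_ge hr (le_of_lt ht), ← ENNReal.ofReal_mul hφ_nonneg,
          Real.rpow_neg (hr.trans ht).le, div_eq_mul_inv]
    _ = ENNReal.ofReal (φ lam⁻¹) * ENNReal.ofReal (r ^ (-β) / β) := by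
        rw [lintegral_const_mul' _ _ ENNReal.ofReal_ne_top,
          setLIntegral_Ioi_rpow_of_lt (by linarith) hr, neg_add, neg_add_cancel_right,
          neg_div_neg_eq]
    _ = ENNReal.ofReal β⁻¹ * ENNReal.ofReal (φ lam⁻¹ / r ^ β) := by
        rw [← ENNReal.ofReal_mul hφ_nonneg, ← ENNReal.ofReal_mul (by positivity),
          Real.rpow_neg hr.le]
        congr 1
        ring

lemma lintegral_coneMajorant_norm_le {E : Type*} [NormedAddCommGroup E] [NormedSpace ℝ E]
    [Nontrivial E] [FiniteDimensional ℝ E] [MeasurableSpace E] [BorelSpace E]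
    (μ : Measure E) [μ.IsAddHaarMeasure] (hφ : IsYoung φ) (hβ : 0 < β) {M : ℝ}
    (hM : CbetaLE β φ M) (hr : 0 < r) (hlam : 0 < lam) :
    ∫⁻ h, coneMajorant φ (Module.finrank ℝ E + β) r lam ‖h‖ ∂μ ≤
      μ.toSphere univ * (ENNReal.ofReal M + ENNReal.ofReal β⁻¹) *
        ENNReal.ofReal (φ lam⁻¹ / r ^ β) := by
  have hφ_pos : 0 < φ lam⁻¹ := hφ.2.2.2 _ (inv_pos.2 hlam)
  have hexponent : (Module.finrank ℝ E + β : ℝ) = (Module.finrank ℝ E - 1 : ℕ) + (β + 1) := by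
    rw [Nat.cast_pred Module.finrank_pos]
    ring
  rw [lintegral_fun_norm_addHaar μ (measurable_coneMajorant hφ.1 _ hr.le hlam.le), mul_assoc]
  gcongr
  calc ∫⁻ t in Ioi 0, ENNReal.ofReal (t ^ (Module.finrank ℝ E - 1)) *
          coneMajorant φ (Module.finrank ℝ E + β) r lam t
      = ∫⁻ t in Ioi 0, coneMajorant φ (β + 1) r lam t := by
        refine setLIntegral_congr_fun measurableSet_Ioi fun t ht => ?_
        rw [hexponent, ofReal_pow_mul_coneMajorant _ ht]
    _ = (∫⁻ t in Ioc 0 r, coneMajorant φ (β + 1) r lam t) +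
          ∫⁻ t in Ioi r, coneMajorant φ (β + 1) r lam t := by
        rw [← Ioc_union_Ioi_eq_Ioi hr.le, lintegral_union measurableSet_Ioi Ioc_disjoint_Ioi_same]
    _ ≤ (ENNReal.ofReal M + ENNReal.ofReal β⁻¹) * ENNReal.ofReal (φ lam⁻¹ / r ^ β) := by
        rw [add_mul, setLIntegral_Ioi_coneMajorant hβ hr hφ_pos.le]
        gcongr
        exact setLIntegral_Ioc_coneMajorant_le hM hr hlam hφ_pos

end ConeMajorant

section Cone

variable {X : Type*} [PseudoMetricSpace X] {x z : X} {r : ℝ}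

/-- The cone `z ↦ max(0, 1 - |z - x|/r)` with apex `x` and base `B(x, r)`: the test function in
the imbedding. -/
noncomputable def cone (x : X) (r : ℝ) (z : X) : ℝ :=
  max 0 (1 - dist z x / r)

lemma continuous_cone (x : X) (r : ℝ) : Continuous (cone x r) := by
  unfold cone
  fun_prop

@[simp]
lemma cone_self (x : X) (r : ℝ) : cone x r x = 1 := by
  simp [cone]

lemma cone_eq_zero (hr : 0 < r) (hz : z ∉ ball x r) : cone x r z = 0 := by
  rw [mem_ball, not_lt] at hz
  exact max_eq_left (sub_nonpos.2 ((one_le_div hr).2 hz))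

lemma cone_mem_Icc (x z : X) (hr : 0 ≤ r) : cone x r z ∈ Icc 0 1 :=
  ⟨le_max_left _ _, max_le zero_le_one (sub_le_self _ (by positivity))⟩

lemma abs_cone_sub_le_dist_div (x z w : X) (hr : 0 < r) :
    |cone x r z - cone x r w| ≤ dist z w / r :=
  calc |cone x r z - cone x r w| ≤ |(1 - dist z x / r) - (1 - dist w x / r)| := by
        simpa [cone] using abs_max_sub_max_le_max 0 (1 - dist z x / r) 0 (1 - dist w x / r)
    _ = |dist z x - dist w x| / r := by
        rw [sub_sub_sub_cancel_left, ← sub_div, abs_div, abs_of_pos hr, abs_sub_comm]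
    _ ≤ dist z w / r := by
        gcongr
        exact abs_dist_sub_le z w x

lemma abs_cone_sub_le_min (x z w : X) (hr : 0 < r) :
    |cone x r z - cone x r w| ≤ min 1 (dist z w / r) := by
  refine le_min ?_ (abs_cone_sub_le_dist_div x z w hr)
  exact Real.dist_le_of_mem_Icc_01 (cone_mem_Icc x z hr.le) (cone_mem_Icc x w hr.le)

end Cone

section Seminorm

variable {n : ℕ} {β : ℝ} {φ : ℝ → ℝ} {Ω : Set (EuclideanSpace ℝ (Fin n))}

lemma fracNorm_le_ofReal {u : EuclideanSpace ℝ (Fin n) → ℝ} {lam : ℝ} (hlam : 0 < lam)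
    (hu : fracIntegral n β φ Ω u lam ≤ 1) : fracNorm n β φ Ω u ≤ ENNReal.ofReal lam :=
  sInf_le ⟨ENNReal.ofReal_pos.2 hlam, ENNReal.ofReal_ne_top, by
    rwa [ENNReal.toReal_ofReal hlam.le]⟩

lemma fracIntegral_le_lintegral_coneMajorant (hφ : IsYoung φ) {u : EuclideanSpace ℝ (Fin n) → ℝ}
    {s : Set (EuclideanSpace ℝ (Fin n))} (hs : MeasurableSet s) (hu_zero : ∀ z ∉ s, u z = 0)
    {r lam : ℝ} (hu : ∀ z w, |u z - u w| ≤ min 1 (dist z w / r)) (hr : 0 < r) (hlam : 0 < lam) :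
    fracIntegral n β φ Ω u lam ≤ 2 * (volume (s ∩ Ω) *
      ∫⁻ h : EuclideanSpace ℝ (Fin n), coneMajorant φ (n + β) r lam ‖h‖) := by
  refine lintegral_lintegral_le_of_le_comp_sub
    ((measurable_coneMajorant hφ.1 _ hr.le hlam.le).comp measurable_norm)
    (fun h => by simp only [Function.comp_apply, norm_neg]) hs (fun z w => ?_) fun z hz w hw => ?_
  · rw [Function.comp_apply, coneMajorant, ← dist_eq_norm, abs_dist]
    gcongr
    exact hφ.monotoneOn (mem_Ici.2 (by positivity)) (mem_Ici.2 (by positivity))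
      (by gcongr; exact hu z w)
  · simp [hu_zero z hz, hu_zero w hw, hφ.2.2.1]

lemma exists_fracIntegral_cone_le [NeZero n] (hβ : 0 < β) (hφ : IsYoung φ)
    (hCβ : CbetaFinite β φ) (Ω : Set (EuclideanSpace ℝ (Fin n))) :
    ∃ A > 0, ∀ x, ∀ r > 0, ∀ lam > 0, fracIntegral n β φ Ω (cone x r) lam ≤
      ENNReal.ofReal (A * (φ lam⁻¹ / r ^ β) * volume.real (ball x r ∩ Ω)) := by
  obtain ⟨M, hM⟩ := hCβ
  set σ := (volume : Measure (EuclideanSpace ℝ (Fin n))).toSphere univ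
  have hσ : σ ≠ 0 := Measure.measure_univ_ne_zero.2 (Measure.toSphere_ne_zero _)
  have hσ_top : σ ≠ ∞ := measure_ne_top _ _
  set A : ℝ≥0∞ := 2 * (σ * (ENNReal.ofReal M + ENNReal.ofReal β⁻¹)) with hA_def
  have hA : A ≠ 0 := by simp [A, hσ, hβ]
  have hA_top : A ≠ ∞ := by finiteness
  refine ⟨A.toReal, ENNReal.toReal_pos hA hA_top, fun x r hr lam hlam => ?_⟩
  have hintegral := lintegral_coneMajorant_norm_le
    (volume : Measure (EuclideanSpace ℝ (Fin n))) hφ hβ hM hr hlam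
  rw [finrank_euclideanSpace_fin] at hintegral
  have hball : volume (ball x r ∩ Ω) ≠ ∞ :=
    measure_ne_top_of_subset inter_subset_left measure_ball_lt_top.ne
  calc fracIntegral n β φ Ω (cone x r) lam
      ≤ 2 * (volume (ball x r ∩ Ω) * ∫⁻ h : EuclideanSpace ℝ (Fin n),
          coneMajorant φ (n + β) r lam ‖h‖) :=
        fracIntegral_le_lintegral_coneMajorant hφ measurableSet_ball
          (fun _ hz => cone_eq_zero hr hz) (fun z w => abs_cone_sub_le_min x z w hr) hr hlam
    _ ≤ 2 * (volume (ball x r ∩ Ω) * (σ * (ENNReal.ofReal M + ENNReal.ofReal β⁻¹) *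
          ENNReal.ofReal (φ lam⁻¹ / r ^ β))) := by gcongr
    _ = A * ENNReal.ofReal (φ lam⁻¹ / r ^ β) * volume (ball x r ∩ Ω) := by
        rw [hA_def]
        ring
    _ = ENNReal.ofReal (A.toReal * (φ lam⁻¹ / r ^ β) * volume.real (ball x r ∩ Ω)) := by
        rw [ENNReal.ofReal_mul' measureReal_nonneg, ENNReal.ofReal_mul ENNReal.toReal_nonneg,
          ENNReal.ofReal_toReal hA_top, ofReal_measureReal hball]

end Seminorm

section HolderImbedding

variable {n : ℕ} {β C : ℝ} {φ : ℝ → ℝ} {Ω : Set (EuclideanSpace ℝ (Fin n))}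
  {x y : EuclideanSpace ℝ (Fin n)}

/-- The Hölder-type imbedding of `Ẇ^{β,φ}(Ω)` with constant `C`: every `u` in the space has a
representative with modulus of continuity `C φ⁻¹(|x - y|^{β-n}) ‖u‖` on `Ω`. -/
def HolderImbedding (n : ℕ) (β : ℝ) (φ : ℝ → ℝ) (Ω : Set (EuclideanSpace ℝ (Fin n))) (C : ℝ) :
    Prop :=
  ∀ u : EuclideanSpace ℝ (Fin n) → ℝ, MemW n β φ Ω u →
    ∃ v : EuclideanSpace ℝ (Fin n) → ℝ,
      (∀ᵐ x ∂(volume.restrict Ω), v x = u x) ∧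
      ∀ x ∈ Ω, ∀ y ∈ Ω,
        |v x - v y| ≤ C * yInv φ (dist x y ^ (β - (n : ℝ))) * (fracNorm n β φ Ω u).toReal

lemma continuousOn_of_abs_sub_le_yInv {X : Type*} [PseudoMetricSpace X] (hφ : IsYoung φ) {γ : ℝ}
    (hγ : 0 < γ) {s : Set X} {v : X → ℝ} {N : ℝ}
    (hv : ∀ x ∈ s, ∀ y ∈ s, |v x - v y| ≤ C * yInv φ (dist x y ^ γ) * N) :
    ContinuousOn v s := by
  intro b hb
  have hdist : Tendsto (fun a => dist a b ^ γ) (𝓝[s] b) (𝓝 0) := by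
    have hcont : Continuous fun a => dist a b ^ γ :=
      (continuous_id.dist continuous_const).rpow_const fun _ => .inr hγ.le
    simpa [hγ.ne'] using hcont.continuousWithinAt.tendsto (x := b) (s := s)
  have hmodulus : Tendsto (fun a => C * yInv φ (dist a b ^ γ) * N) (𝓝[s] b) (𝓝 0) := by
    simpa using ((hφ.tendsto_yInv_zero.comp hdist).const_mul C).mul_const N
  refine tendsto_iff_dist_tendsto_zero.2
    (squeeze_zero' (.of_forall fun _ => dist_nonneg) ?_ hmodulus)
  filter_upwards [self_mem_nhdsWithin] with a ha
  exact hv a ha b hb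

lemma HolderImbedding.abs_sub_le (hI : HolderImbedding n β φ Ω C) (hβ : (n : ℝ) < β)
    (hφ : IsYoung φ) (hΩ : IsOpen Ω) {u : EuclideanSpace ℝ (Fin n) → ℝ}
    (hu : MemW n β φ Ω u) (hu_cont : ContinuousOn u Ω) (hx : x ∈ Ω) (hy : y ∈ Ω) :
    |u x - u y| ≤ C * yInv φ (dist x y ^ (β - (n : ℝ))) * (fracNorm n β φ Ω u).toReal := by
  obtain ⟨v, hvu, hv⟩ := hI u hu
  have hv_cont : ContinuousOn v Ω := continuousOn_of_abs_sub_le_yInv hφ (sub_pos.2 hβ) hv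
  have hv_eq : EqOn v u Ω := Measure.eqOn_open_of_ae_eq hvu hΩ hv_cont hu_cont
  simpa only [hv_eq hx, hv_eq hy] using hv x hx y hy

lemma HolderImbedding.inv_le_of_fracIntegral_cone_le_one (hI : HolderImbedding n β φ Ω C)
    (hC : 0 ≤ C) (hβ : (n : ℝ) < β) (hφ : IsYoung φ) (hΩ : IsOpen Ω) (hx : x ∈ Ω) (hy : y ∈ Ω)
    (hxy : x ≠ y) {lam : ℝ} (hlam : 0 < lam)
    (hcone : fracIntegral n β φ Ω (cone x (dist x y)) lam ≤ 1) :
    lam⁻¹ ≤ C * yInv φ (dist x y ^ (β - (n : ℝ))) := by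
  have hnorm : fracNorm n β φ Ω (cone x (dist x y)) ≤ ENNReal.ofReal lam :=
    fracNorm_le_ofReal hlam hcone
  have hcone_cont := continuous_cone x (dist x y)
  have hmem : MemW n β φ Ω (cone x (dist x y)) :=
    ⟨hcone_cont.locallyIntegrable.locallyIntegrableOn _,
      ne_top_of_le_ne_top ENNReal.ofReal_ne_top hnorm⟩
  have hosc := hI.abs_sub_le hβ hφ hΩ hmem hcone_cont.continuousOn hx hy
  rw [cone_self, cone_eq_zero (dist_pos.2 hxy) (by simp [dist_comm y x]), sub_zero, abs_one]
    at hosc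
  have hyInv := yInv_nonneg φ (dist x y ^ (β - (n : ℝ)))
  rw [inv_le_iff_one_le_mul₀ hlam]
  refine hosc.trans ?_
  gcongr
  exact ENNReal.toReal_le_of_le_ofReal hlam.le hnorm

lemma HolderImbedding.exists_pow_dist_le_volume [NeZero n] (hI : HolderImbedding n β φ Ω C)
    (hC : 0 ≤ C) (hβ : (n : ℝ) < β) (hφ : IsYoung φ) {K : ℝ} (hK : IsDoubling φ K)
    (hCβ : CbetaFinite β φ) (hΩ : IsOpen Ω) :
    ∃ A > 0, ∀ x ∈ Ω, ∀ y ∈ Ω, x ≠ y →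
      dist x y ^ n ≤ A * volume.real (ball x (dist x y) ∩ Ω) := by
  obtain ⟨A, hA, hcone⟩ := exists_fracIntegral_cone_le ((Nat.cast_nonneg n).trans_lt hβ) hφ hCβ Ω
  obtain ⟨D, hD, hφD⟩ := hK.exists_map_mul_le hφ.monotoneOn hC
  refine ⟨A * D, by positivity, fun x hx y hy hxy => ?_⟩
  set r := dist x y
  have hr : 0 < r := dist_pos.2 hxy
  set m := volume.real (ball x r ∩ Ω) with hm_def
  have hm : 0 < m := ENNReal.toReal_pos
    ((isOpen_ball.inter hΩ).measure_pos _ ⟨x, mem_ball_self hr, hx⟩).ne'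
    (measure_ne_top_of_subset inter_subset_left measure_ball_lt_top.ne)
  set τ := yInv φ (r ^ β / (A * m))
  set s := yInv φ (r ^ (β - (n : ℝ)))
  have hτ : 0 < τ := hφ.yInv_pos (by positivity)
  have hs : 0 < s := hφ.yInv_pos (by positivity)
  have hφτ : φ τ = r ^ β / (A * m) := hφ.apply_yInv (by positivity)
  have hφs : φ s = r ^ β / r ^ n := by
    rw [hφ.apply_yInv (by positivity), Real.rpow_sub hr, Real.rpow_natCast]
  have hcone_one : fracIntegral n β φ Ω (cone x r) τ⁻¹ ≤ 1 := by
    refine (hcone x r hr τ⁻¹ (inv_pos.2 hτ)).trans (ENNReal.ofReal_le_one.2 (le_of_eq ?_))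
    rw [inv_inv, hφτ, ← hm_def]
    field_simp
  have hτs : τ ≤ C * s := by
    simpa only [inv_inv] using hI.inv_le_of_fracIntegral_cone_le_one hC hβ hφ hΩ hx hy hxy
      (inv_pos.2 hτ) hcone_one
  have hpow : r ^ β / (A * m) ≤ D * (r ^ β / r ^ n) := by
    rw [← hφτ, ← hφs]
    exact (hφ.monotoneOn hτ.le (mem_Ici.2 (by positivity)) hτs).trans (hφD s hs)
  rw [← mul_div_assoc, div_le_div_iff₀ (by positivity) (by positivity)] at hpow
  exact le_of_mul_le_mul_left (hpow.trans_eq (by ring)) (Real.rpow_pos_of_pos hr β)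

end HolderImbedding

lemma exists_dist_eq_of_isPreconnected {X : Type*} [PseudoMetricSpace X] {s : Set X}
    (hs : IsPreconnected s) {x : X} (hx : x ∈ s) {r : ℝ} (hr : 0 ≤ r)
    (hdiam : ENNReal.ofReal (2 * r) < ediam s) : ∃ y ∈ s, dist x y = r := by
  obtain ⟨y, hy, hxy⟩ : ∃ y ∈ s, r ≤ dist x y := by
    by_contra! hball
    rw [ENNReal.ofReal_mul two_pos.le, ENNReal.ofReal_ofNat] at hdiam
    refine hdiam.not_ge ((ediam_mono fun y hy => ?_).trans (ediam_closedEBall_le (x := x)))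
    rw [mem_closedEBall', edist_dist]
    exact ENNReal.ofReal_le_ofReal (hball y hy).le
  exact hs.intermediate_value hx hy (f := dist x) (by fun_prop) ⟨by simpa using hr, hxy⟩

/-- the Hölder-type imbedding (case `β > n`) implies Ahlfors `n`-regularity. -/
theorem imbedding_high_implies_ahlfors
    (n : ℕ) (hn : 1 ≤ n) (β : ℝ) (hβ : (n : ℝ) < β)
    (φ : ℝ → ℝ) (hφ : IsYoung φ) (hdbl : ∃ K : ℝ, IsDoubling φ K)
    (hCβ : CbetaFinite β φ)
    (Ω : Set (EuclideanSpace ℝ (Fin n))) (hΩopen : IsOpen Ω) (hΩconn : IsConnected Ω)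
    (hI : ∃ C > (0 : ℝ), ∀ u : EuclideanSpace ℝ (Fin n) → ℝ, MemW n β φ Ω u →
      ∃ v : EuclideanSpace ℝ (Fin n) → ℝ,
        (∀ᵐ x ∂(volume.restrict Ω), v x = u x) ∧
        ∀ x ∈ Ω, ∀ y ∈ Ω,
          |v x - v y| ≤
            C * yInv φ (dist x y ^ (β - (n : ℝ))) * (fracNorm n β φ Ω u).toReal) :
    AhlforsRegular n Ω := by
  obtain ⟨C, hC, hI⟩ := hI
  obtain ⟨K, hK⟩ := hdbl
  have : NeZero n := ⟨by lia⟩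
  obtain ⟨A, hA, hvol⟩ :=
    HolderImbedding.exists_pow_dist_le_volume hI hC.le hβ hφ hK hCβ hΩopen
  refine ⟨A⁻¹ * (1 / 4) ^ n, by positivity, fun x hx r hr hdiam => ?_⟩
  rw [show r = 2 * (2 * (r / 4)) by ring, ENNReal.ofReal_mul two_pos.le, ENNReal.ofReal_ofNat]
    at hdiam
  obtain ⟨y, hy, hxy⟩ := exists_dist_eq_of_isPreconnected hΩconn.isPreconnected hx
    (by positivity) (lt_of_mul_lt_mul_left' hdiam)
  have hxy_ne : x ≠ y := dist_pos.1 (hxy ▸ by positivity)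
  calc ENNReal.ofReal (A⁻¹ * (1 / 4) ^ n * r ^ n)
      = ENNReal.ofReal (A⁻¹ * dist x y ^ n) := by rw [hxy, mul_assoc, ← mul_pow, one_div_mul_eq_div]
    _ ≤ ENNReal.ofReal (volume.real (ball x (dist x y) ∩ Ω)) := by
        gcongr
        exact (inv_mul_le_iff₀ hA).2 (hvol x hx y hy hxy_ne)
    _ ≤ volume (ball x (r / 4) ∩ Ω) := by rw [hxy]; exact ENNReal.ofReal_toReal_le
    _ ≤ volume (ball x r ∩ Ω) := by gcongr; linarith
end

section
/- Let n ≥ 1, β > 0, and let φ be a Young function satisfying C_β := sup_{t>0} (t^β/φ(t)) ∫_0^t φ(s) s^{-β-1} ds < ∞. Then for every domain Ω ⊂ ℝⁿ, every continuously differentiable function u with compact support contained in Ω belongs to Ẇ^{β,φ}(Ω), i.e. its fractional Orlicz–Sobolev seminorm on Ω is finite. -/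
/-!
Let `L > 0` be a Lipschitz constant of `u`. A ball on which `u` does not vanish has bounded radius,
because the support of `u` has finite measure, so `u` is bounded and
`|u x - u y| / L ≤ min (dist x y) B` for some `B > 0`. As `φ` is increasing, the integrand of the
seminorm at `λ = L` is at most `g (x - y)` with `g z = φ (min ‖z‖ B) / ‖z‖ ^ (n + β)`, and it
vanishes unless `x` or `y` lies in the support of `u`. Tonelli and translation invariance therefore
bound the double integral by `2 |supp u| ∫ g`. In polar coordinates `∫ g` is a multiple of
`∫_0^∞ φ (min r B) r ^ (-β - 1) dr`, which converges at `0` by the condition `C_β < ∞` and at `∞`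
by `β > 0`. Finally, `φ (a t) ≤ a φ t` for `a ≤ 1` by convexity, so enlarging `λ` brings the double
integral below `1`.
-/

open MeasureTheory Metric Set Filter
open scoped ENNReal NNReal Topology Classical

namespace IsYoung

variable {φ : ℝ → ℝ} {a t : ℝ}

theorem nonneg (hφ : IsYoung φ) (ht : 0 ≤ t) : 0 ≤ φ t := by
  obtain ⟨-, -, hφ0, hφpos⟩ := hφ
  rcases ht.eq_or_lt with rfl | ht
  · exact hφ0.ge
  · exact (hφpos t ht).le

theorem map_mul_le (hφ : IsYoung φ) (ha : 0 ≤ a) (ha1 : a ≤ 1) (ht : 0 ≤ t) :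
    φ (a * t) ≤ a * φ t := by
  obtain ⟨-, hconv, hφ0, -⟩ := hφ
  simpa [hφ0] using hconv.2 (mem_Ici.2 ht) self_mem_Ici ha (sub_nonneg.2 ha1) (by ring)

theorem monotoneOn_s10 (hφ : IsYoung φ) : MonotoneOn φ (Ici 0) := by
  intro s (hs : 0 ≤ s) t (ht : 0 ≤ t) hst
  rcases ht.eq_or_lt with rfl | ht
  · rw [hst.antisymm hs]
  · have hst1 : s / t ≤ 1 := (div_le_one ht).2 hst
    calc φ s = φ (s / t * t) := by rw [div_mul_cancel₀ _ ht.ne']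
      _ ≤ s / t * φ t := hφ.map_mul_le (by positivity) hst1 ht.le
      _ ≤ φ t := mul_le_of_le_one_left (hφ.nonneg ht.le) hst1

theorem continuousOn_comp_min (hφ : IsYoung φ) (ht : 0 ≤ t) :
    ContinuousOn (fun r => φ (min r t)) (Ici 0) :=
  hφ.1.comp (by fun_prop) fun _ hr => le_min hr ht

theorem continuousOn_comp_min_div_rpow (hφ : IsYoung φ) (ht : 0 ≤ t) (p : ℝ) :
    ContinuousOn (fun r => φ (min r t) / r ^ p) (Ioi 0) :=
  ((hφ.continuousOn_comp_min ht).mono Ioi_subset_Ici_self).div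
    (continuousOn_id.rpow_const fun _ hr => Or.inl (ne_of_gt hr))
    fun _ hr => (Real.rpow_pos_of_pos hr _).ne'

end IsYoung

theorem integrableAtFilter_congr_of_eventuallyEq {α E : Type*} [MeasurableSpace α]
    [NormedAddCommGroup E] {μ : Measure α} {l : Filter α} [l.IsMeasurablyGenerated] {f g : α → E}
    (hf : IntegrableAtFilter f l μ) (hfg : f =ᶠ[l] g) : IntegrableAtFilter g l μ := by
  obtain ⟨s, hs, hs_meas, hfs, hfgs⟩ :=
    (hf.eventually.and hfg.smallSets).exists_measurable_mem_of_smallSets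
  exact ⟨s, hs, hfs.congr_fun hfgs hs_meas⟩

theorem CbetaFinite.integrableAtFilter {β : ℝ} {φ : ℝ → ℝ} (hC : CbetaFinite β φ)
    (hφ : IsYoung φ) : IntegrableAtFilter (fun s => φ s / s ^ (β + 1)) (𝓝[>] 0) := by
  obtain ⟨M, hM⟩ := hC
  have hfin : ∫⁻ s in Ioc (0 : ℝ) 1, ENNReal.ofReal (φ s / s ^ (β + 1)) ≠ ∞ := by
    refine (ENNReal.lt_top_of_mul_ne_top_right
      ((hM 1 one_pos).trans_lt ENNReal.ofReal_lt_top).ne ?_).ne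
    simpa using hφ.2.2.2 1 one_pos
  have hcont : ContinuousOn (fun s => φ s / s ^ (β + 1)) (Ioc 0 1) :=
    ((hφ.continuousOn_comp_min_div_rpow zero_le_one (β + 1)).mono Ioc_subset_Ioi_self).congr
      fun s hs => by simp only [min_eq_left hs.2]
  refine ⟨Ioc 0 1, Ioc_mem_nhdsGT one_pos, ?_⟩
  refine (lintegral_ofReal_ne_top_iff_integrable
    (hcont.aestronglyMeasurable measurableSet_Ioc) ?_).1 hfin
  filter_upwards [ae_restrict_mem measurableSet_Ioc] with s hs
  exact div_nonneg (hφ.nonneg hs.1.le) (Real.rpow_nonneg hs.1.le _)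

section TruncatedKernel

variable {β B : ℝ} {φ : ℝ → ℝ}

theorem integrableOn_Ioi_comp_min_div_rpow (hβ : 0 < β) (hφ : IsYoung φ)
    (hint : IntegrableAtFilter (fun s => φ s / s ^ (β + 1)) (𝓝[>] 0)) (hB : 0 < B) :
    IntegrableOn (fun r => φ (min r B) / r ^ (β + 1)) (Ioi 0) := by
  refine integrableOn_Ioi_iff_integrableAtFilter_atTop_nhdsWithin.2 ⟨?atTop, ?zero, ?loc⟩
  case atTop =>
    have hpow : IntegrableAtFilter (fun r : ℝ => φ B • r ^ (-(β + 1))) atTop :=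
      (integrableAtFilter_rpow_atTop_iff.2 (by linarith)).smul (φ B)
    refine integrableAtFilter_congr_of_eventuallyEq hpow ?_
    filter_upwards [eventually_ge_atTop B] with r hr
    rw [min_eq_right hr, Real.rpow_neg (hB.le.trans hr), smul_eq_mul, div_eq_mul_inv]
  case zero =>
    refine integrableAtFilter_congr_of_eventuallyEq hint ?_
    filter_upwards [Ioc_mem_nhdsGT hB] with r hr
    rw [min_eq_left hr.2]
  case loc =>
    exact (hφ.continuousOn_comp_min_div_rpow hB.le _).locallyIntegrableOn measurableSet_Ioi

variable {E : Type*} [NormedAddCommGroup E] [NormedSpace ℝ E]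

/-- The radial kernel `z ↦ φ (min ‖z‖ B) / ‖z‖ ^ (d + β)` with `d = dim E`. Evaluated at `x - y`,
it dominates the integrand of the fractional Orlicz–Sobolev seminorm of a `1`-Lipschitz function
with oscillation at most `B`. -/
noncomputable def truncatedKernel (β : ℝ) (φ : ℝ → ℝ) (B : ℝ) (z : E) : ℝ :=
  φ (min ‖z‖ B) / ‖z‖ ^ (Module.finrank ℝ E + β)

variable [MeasurableSpace E] [BorelSpace E]

theorem measurable_truncatedKernel (hφ : IsYoung φ) (hB : 0 ≤ B) :
    Measurable (truncatedKernel β φ B : E → ℝ) :=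
  ((hφ.continuousOn_comp_min hB).comp_continuous continuous_norm norm_nonneg).measurable.div
    (measurable_norm.pow_const _)

theorem integrable_truncatedKernel [FiniteDimensional ℝ E] [Nontrivial E] (μ : Measure E)
    [μ.IsAddHaarMeasure] (hβ : 0 < β) (hφ : IsYoung φ)
    (hint : IntegrableAtFilter (fun s => φ s / s ^ (β + 1)) (𝓝[>] 0)) (hB : 0 < B) :
    Integrable (truncatedKernel β φ B) μ := by
  refine (integrable_fun_norm_addHaar μ
    (f := fun r => φ (min r B) / r ^ (Module.finrank ℝ E + β))).2 ?_
  refine (integrableOn_Ioi_comp_min_div_rpow hβ hφ hint hB).congr_fun (fun r hr => ?_)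
    measurableSet_Ioi
  have hr : 0 < r := hr
  have hrpow : r ^ (Module.finrank ℝ E + β) = r ^ (Module.finrank ℝ E - 1) * r ^ (β + 1) := by
    rw [← Real.rpow_natCast, ← Real.rpow_add hr, Nat.cast_pred Module.finrank_pos]
    ring_nf
  simp only [smul_eq_mul, hrpow]
  field_simp

end TruncatedKernel

theorem lintegral_lintegral_le_two_mul_measure_mul_lintegral {G : Type*} [AddGroup G]
    [MeasurableSpace G] [MeasurableAdd₂ G] [MeasurableNeg G] {μ : Measure G} [SFinite μ]
    [μ.IsAddLeftInvariant] [μ.IsAddRightInvariant] [μ.IsNegInvariant] {K : Set G}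
    (hK : MeasurableSet K) {g : G → ℝ≥0∞} (hg : Measurable g) {F : G → G → ℝ≥0∞}
    (hFg : ∀ x y, F x y ≤ g (x - y)) (hF : ∀ x ∉ K, ∀ y ∉ K, F x y = 0) :
    ∫⁻ x, ∫⁻ y, F x y ∂μ ∂μ ≤ 2 * (μ K * ∫⁻ z, g z ∂μ) := by
  have hmem : ∫⁻ x in K, ∫⁻ y, F x y ∂μ ∂μ ≤ μ K * ∫⁻ z, g z ∂μ :=
    calc ∫⁻ x in K, ∫⁻ y, F x y ∂μ ∂μ
        ≤ ∫⁻ x in K, ∫⁻ y, g (x - y) ∂μ ∂μ := by gcongr; exact hFg _ _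
      _ = μ K * ∫⁻ z, g z ∂μ := by
        simp only [lintegral_sub_left_eq_self, setLIntegral_const, mul_comm]
  have hcompl : ∫⁻ x in Kᶜ, ∫⁻ y, F x y ∂μ ∂μ ≤ μ K * ∫⁻ z, g z ∂μ :=
    calc ∫⁻ x in Kᶜ, ∫⁻ y, F x y ∂μ ∂μ
        = ∫⁻ x in Kᶜ, ∫⁻ y in K, F x y ∂μ ∂μ :=
          setLIntegral_congr_fun hK.compl fun x hx =>
            (setLIntegral_eq_of_support_subset fun y hy => by_contra fun hyK =>
              hy (hF x hx y hyK)).symm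
      _ ≤ ∫⁻ x, ∫⁻ y in K, g (x - y) ∂μ ∂μ :=
          (setLIntegral_le_lintegral _ _).trans (by gcongr; exact hFg _ _)
      _ = ∫⁻ y in K, ∫⁻ x, g (x - y) ∂μ ∂μ := lintegral_lintegral_swap (by fun_prop)
      _ = μ K * ∫⁻ z, g z ∂μ := by
        simp only [lintegral_sub_right_eq_self, setLIntegral_const, mul_comm]
  rw [← lintegral_add_compl _ hK, two_mul]
  exact add_le_add hmem hcompl

section BoundedRange

variable {E : Type*} [NormedAddCommGroup E] [NormedSpace ℝ E] [MeasurableSpace E] [BorelSpace E]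
  [FiniteDimensional ℝ E] [Nontrivial E] {μ : Measure E} [μ.IsAddHaarMeasure]

theorem exists_forall_lt_measure_ball {m : ℝ≥0∞} (hm : m ≠ ∞) :
    ∃ R : ℝ, ∀ x : E, m < μ (ball x R) := by
  have : NoncompactSpace E := NormedSpace.noncompactSpace ℝ E
  have hsup : ⨆ k : ℕ, μ (ball 0 k) = ∞ := by
    have hmono : Monotone fun k : ℕ => ball (0 : E) k :=
      fun _ _ hkl => ball_subset_ball (Nat.cast_le.2 hkl)
    rw [← hmono.measure_iUnion, iUnion_ball_nat, measure_univ_of_isAddLeftInvariant]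
  obtain ⟨k, hk⟩ := lt_iSup_iff.1 (hm.lt_top.trans_eq hsup.symm)
  exact ⟨k, fun x => by rwa [Measure.addHaar_ball_center]⟩

theorem isBounded_range_of_lipschitzWith_of_measure_support_ne_top {F : Type*}
    [NormedAddCommGroup F] {u : E → F} {C : ℝ≥0} (hu : LipschitzWith C u)
    (hsupp : μ (Function.support u) ≠ ∞) : Bornology.IsBounded (range u) := by
  obtain ⟨R, hR⟩ := exists_forall_lt_measure_ball (μ := μ) hsupp
  refine isBounded_iff_forall_norm_le.2 ⟨C * R, forall_mem_range.2 fun x => ?_⟩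
  obtain ⟨y, hyx, hy⟩ := not_subset.1 fun hsub => (measure_mono hsub).not_gt (hR x)
  calc ‖u x‖ = dist (u x) (u y) := by rw [Function.notMem_support.1 hy, dist_zero_right]
    _ ≤ C * dist x y := hu.dist_le_mul x y
    _ ≤ C * R := by gcongr; exact (mem_ball'.1 hyx).le

end BoundedRange

section Seminorm

variable {n : ℕ} {β L : ℝ} {φ : ℝ → ℝ} {Ω : Set (EuclideanSpace ℝ (Fin n))}
  {u : EuclideanSpace ℝ (Fin n) → ℝ}

theorem fracIntegral_ne_top_of_lipschitzWith [NeZero n] (hβ : 0 < β) (hφ : IsYoung φ)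
    (hint : IntegrableAtFilter (fun s => φ s / s ^ (β + 1)) (𝓝[>] 0)) {L : ℝ≥0} (hL : 0 < L)
    (hu : LipschitzWith L u) (hsupp : volume (Function.support u) ≠ ∞) :
    fracIntegral n β φ Ω u L ≠ ∞ := by
  obtain ⟨A, hA⟩ :=
    isBounded_range_iff.1 (isBounded_range_of_lipschitzWith_of_measure_support_ne_top hu hsupp)
  set B : ℝ := max 1 (A / L)
  have hB : 0 < B := one_pos.trans_le (le_max_left _ _)
  have hmin (x y) : |u x - u y| / L ≤ min ‖x - y‖ B := by
    rw [← Real.dist_eq, ← dist_eq_norm]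
    refine le_min ((div_le_iff₀' (by positivity)).2 (hu.dist_le_mul x y)) (le_max_of_le_right ?_)
    gcongr
    exact hA x y
  have hker (x y) : ENNReal.ofReal (φ (|u x - u y| / L) / dist x y ^ (n + β)) ≤
      ENNReal.ofReal (truncatedKernel β φ B (x - y)) := by
    rw [truncatedKernel, finrank_euclideanSpace_fin, dist_eq_norm]
    gcongr
    exact hφ.monotoneOn_s10 (mem_Ici.2 (by positivity)) (mem_Ici.2 (by positivity)) (hmin x y)
  have hzero : ∀ x ∉ Function.support u, ∀ y ∉ Function.support u,
      ENNReal.ofReal (φ (|u x - u y| / L) / dist x y ^ (n + β)) = 0 := fun x hx y hy => by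
    simp [Function.notMem_support.1 hx, Function.notMem_support.1 hy, hφ.2.2.1]
  have hker_fin : ∫⁻ z : EuclideanSpace ℝ (Fin n), ENNReal.ofReal (truncatedKernel β φ B z) ≠ ∞ :=
    (integrable_truncatedKernel volume hβ hφ hint hB).lintegral_lt_top.ne
  refine ne_top_of_le_ne_top (by finiteness) (le_trans ?_
    (lintegral_lintegral_le_two_mul_measure_mul_lintegral hu.continuous.isOpen_support.measurableSet
      (measurable_truncatedKernel hφ hB.le).ennreal_ofReal hker hzero))
  exact (setLIntegral_le_lintegral _ _).trans
    (lintegral_mono fun x => setLIntegral_le_lintegral _ _)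

theorem fracIntegral_mul_le (hφ : IsYoung φ) (hL : 0 ≤ L) {c : ℝ} (hc : 1 ≤ c) :
    fracIntegral n β φ Ω u (c * L) ≤ ENNReal.ofReal c⁻¹ * fracIntegral n β φ Ω u L := by
  simp only [fracIntegral, ← lintegral_const_mul' _ _ ENNReal.ofReal_ne_top]
  gcongr with x y
  rw [← ENNReal.ofReal_mul (by positivity), ← mul_div_assoc]
  gcongr
  calc φ (|u x - u y| / (c * L)) = φ (c⁻¹ * (|u x - u y| / L)) := by
        rw [mul_comm c, ← div_div, div_eq_inv_mul _ c]
    _ ≤ c⁻¹ * φ (|u x - u y| / L) :=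
        hφ.map_mul_le (by positivity) (inv_le_one_of_one_le₀ hc) (by positivity)

theorem fracNorm_ne_top_of_fracIntegral_ne_top (hφ : IsYoung φ) (hL : 0 < L)
    (hfin : fracIntegral n β φ Ω u L ≠ ∞) : fracNorm n β φ Ω u ≠ ∞ := by
  set c : ℝ := max 1 (fracIntegral n β φ Ω u L).toReal
  have hc1 : 1 ≤ c := le_max_left _ _
  have hle : fracIntegral n β φ Ω u (c * L) ≤ 1 :=
    calc fracIntegral n β φ Ω u (c * L)
        ≤ ENNReal.ofReal c⁻¹ * fracIntegral n β φ Ω u L := fracIntegral_mul_le hφ hL.le hc1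
      _ ≤ ENNReal.ofReal c⁻¹ * ENNReal.ofReal c := by
        gcongr
        exact (ENNReal.le_ofReal_iff_toReal_le hfin (by positivity)).2 (le_max_right _ _)
      _ = 1 := by
        rw [← ENNReal.ofReal_mul (by positivity), inv_mul_cancel₀ (by positivity),
          ENNReal.ofReal_one]
  refine ne_top_of_le_ne_top ENNReal.ofReal_ne_top
    (sInf_le ⟨ENNReal.ofReal_pos.2 (by positivity : 0 < c * L), ENNReal.ofReal_ne_top, ?_⟩)
  rwa [ENNReal.toReal_ofReal (by positivity)]

end Seminorm

theorem smooth_compactly_supported_mem_general {n : ℕ} [NeZero n] {β : ℝ} (hβ : 0 < β)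
    {φ : ℝ → ℝ} (hφ : IsYoung φ)
    (hint : IntegrableAtFilter (fun s => φ s / s ^ (β + 1)) (𝓝[>] 0))
    (Ω : Set (EuclideanSpace ℝ (Fin n))) {u : EuclideanSpace ℝ (Fin n) → ℝ} {C : ℝ≥0}
    (hu : LipschitzWith C u) (hsupp : volume (Function.support u) ≠ ∞) :
    MemW n β φ Ω u := by
  have hL : 0 < max C 1 := lt_max_of_lt_right one_pos
  exact ⟨hu.continuous.locallyIntegrable.locallyIntegrableOn Ω,
    fracNorm_ne_top_of_fracIntegral_ne_top hφ (NNReal.coe_pos.2 hL)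
      (fracIntegral_ne_top_of_lipschitzWith hβ hφ hint hL (hu.weaken (le_max_left C 1)) hsupp)⟩

/-- `C¹` functions with compact support in `Ω` belong to `Ẇ^{β,φ}(Ω)`. -/
theorem smooth_compactly_supported_mem
    (n : ℕ) (hn : 1 ≤ n) (β : ℝ) (hβ : 0 < β)
    (φ : ℝ → ℝ) (hφ : IsYoung φ) (hCβ : CbetaFinite β φ)
    (Ω : Set (EuclideanSpace ℝ (Fin n))) (hΩopen : IsOpen Ω) (hΩconn : IsConnected Ω)
    (u : EuclideanSpace ℝ (Fin n) → ℝ) (hu : ContDiff ℝ 1 u)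
    (hsupp : HasCompactSupport u) (hsub : tsupport u ⊆ Ω) :
    MemW n β φ Ω u := by
  have : NeZero n := NeZero.of_pos hn
  obtain ⟨C, hC⟩ := hu.lipschitzWith_of_hasCompactSupport hsupp one_ne_zero
  exact smooth_compactly_supported_mem_general hβ hφ (hCβ.integrableAtFilter hφ) Ω hC
    (measure_mono (subset_tsupport u) |>.trans_lt hsupp.isCompact.measure_lt_top).ne
end
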